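/- Fix an integer g ≥ 3 and a field K of characteristic zero. If every CPA-structure on the free-nilpotent Lie algebra F_{g,3} is central, then for every c ≥ 3 every CPA-structure on F_{g,c} is central. -/

import Mathlib

structure IsCPAStructure (K : Type*) {L : Type*} [CommRing K] [LieRing L] [LieAlgebra K L]
    (mul : L →ₗ[K] L →ₗ[K] L) : Prop where
  comm : ∀ x y : L, mul x y = mul y x
  bracket_mul : ∀ x y z : L, mul ⁅x, y⁆ z = mul x (mul y z) - mul y (mul x z)
  mul_bracket : ∀ x y z : L, mul x ⁅y, z⁆ = ⁅mul x y, z⁆ + ⁅y, mul x z⁆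

/-- The free-nilpotent Lie algebra \`F_{g,c}\` on \`g\` generators of nilpotency class \`c\`:
the quotient of the free Lie algebra on \`g\` generators by the \`(c+1)\`-st term \`𝔤^{c+1}\` of
its lower central series (which is \`lowerCentralSeries c\` in Mathlib's indexing). -/
abbrev FreeNilpotentLieAlgebra (K : Type*) [Field K] (g c : ℕ) :=
  FreeLieAlgebra K (Fin g) ⧸
    LieModule.lowerCentralSeries K (FreeLieAlgebra K (Fin g)) (FreeLieAlgebra K (Fin g)) c

namespace CPAProof

open LieModule

section General

variable {K L : Type*} [Field K] [LieRing L] [LieAlgebra K L]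

theorem lcs_succ_induct (k : ℕ) (S : Submodule K L)
    (h : ∀ x : L, ∀ m ∈ lowerCentralSeries K L L k, ⁅x, m⁆ ∈ S) :
    ∀ u ∈ lowerCentralSeries K L L (k + 1), u ∈ S := by
  intro u hu
  rw [lowerCentralSeries_succ, ← LieSubmodule.mem_toSubmodule,
    LieSubmodule.lieIdeal_oper_eq_linear_span'] at hu
  refine Submodule.span_le.mpr ?_ hu
  rintro _ ⟨x, -, m, hm, rfl⟩
  exact h x m hm

theorem lie_mem_lcs_succ (k : ℕ) (x m : L) (hm : m ∈ lowerCentralSeries K L L k) :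
    ⁅x, m⁆ ∈ lowerCentralSeries K L L (k + 1) := by
  rw [lowerCentralSeries_succ]
  exact LieSubmodule.lie_mem_lie (LieSubmodule.mem_top x) hm

theorem lie_mem_lcs_succ' (k : ℕ) (x m : L) (hm : m ∈ lowerCentralSeries K L L k) :
    ⁅m, x⁆ ∈ lowerCentralSeries K L L (k + 1) := by
  rw [← lie_skew]
  exact neg_mem (lie_mem_lcs_succ k x m hm)

theorem lcs_mono {i j : ℕ} (h : i ≤ j) {u : L} (hu : u ∈ lowerCentralSeries K L L j) :
    u ∈ lowerCentralSeries K L L i :=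
  antitone_lowerCentralSeries K L L h hu

theorem mem_lcs_zero (u : L) : u ∈ lowerCentralSeries K L L 0 := by
  rw [lowerCentralSeries_zero]; trivial

/-- `[L^{i+1}, L^{j+1}] ⊆ L^{i+j+2}`. -/
theorem lie_mem_lcs_add (i : ℕ) : ∀ (j : ℕ) (a b : L), a ∈ lowerCentralSeries K L L i →
    b ∈ lowerCentralSeries K L L j → ⁅a, b⁆ ∈ lowerCentralSeries K L L (i + j + 1) := by
  induction i with
  | zero =>
    intro j a b _ hb
    rw [zero_add]
    exact lie_mem_lcs_succ j a b hb
  | succ i ih =>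
    intro j a b ha hb
    let S : Submodule K L :=
      { carrier := {u | ⁅u, b⁆ ∈ lowerCentralSeries K L L (i + 1 + j + 1)}
        add_mem' := fun {u v} hu hv => by
          simp only [Set.mem_ofPred_eq, add_lie] at *; exact add_mem hu hv
        zero_mem' := by simp
        smul_mem' := fun t u hu => by
          simp only [Set.mem_ofPred_eq, smul_lie] at *; exact Submodule.smul_mem _ t hu }
    refine lcs_succ_induct i S ?_ a ha
    intro x m hm
    change ⁅⁅x, m⁆, b⁆ ∈ lowerCentralSeries K L L (i + 1 + j + 1)
    rw [lie_lie]
    refine sub_mem ?_ ?_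
    · have := lie_mem_lcs_succ _ x _ (ih j m b hm hb)
      convert this using 2; omega
    · have := ih (j + 1) m _ hm (lie_mem_lcs_succ j x b hb)
      convert this using 2; omega

/-- A derivation mapping everything to `L^{k+1}` maps `L^{j+1}` to `L^{k+j+1}`. -/
theorem der_lcs (d : L →ₗ[K] L) (hd : ∀ x y, d ⁅x, y⁆ = ⁅d x, y⁆ + ⁅x, d y⁆) (k : ℕ)
    (hk : ∀ x, d x ∈ lowerCentralSeries K L L k) (j : ℕ) :
    ∀ u ∈ lowerCentralSeries K L L j, d u ∈ lowerCentralSeries K L L (k + j) := by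
  induction j with
  | zero => intro u _; exact hk u
  | succ j ih =>
    intro u hu
    refine lcs_succ_induct j
      ((lowerCentralSeries K L L (k + (j + 1))).toSubmodule.comap d) ?_ u hu
    intro x m hm
    rw [Submodule.mem_comap, LieSubmodule.mem_toSubmodule, hd]
    exact add_mem (lie_mem_lcs_add k j _ _ (hk x) hm) (lie_mem_lcs_succ (k + j) _ _ (ih m hm))

end General

section Free

variable (K : Type*) [Field K] (X : Type*)

local notation "𝓛" => FreeLieAlgebra K X

variable {K X} in
theorem free_induct (S : LieSubalgebra K 𝓛) (h : ∀ i, FreeLieAlgebra.of K i ∈ S) (u : 𝓛) :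
    u ∈ S := by
  let f : 𝓛 →ₗ⁅K⁆ S := FreeLieAlgebra.lift K (fun i => ⟨FreeLieAlgebra.of K i, h i⟩)
  have : S.incl.comp f = LieHom.id := by
    ext i; simp [f]
  have h2 := congrArg (fun F : 𝓛 →ₗ⁅K⁆ 𝓛 => F u) this
  simp only [LieHom.comp_apply, LieHom.coe_id, id] at h2
  rw [← h2]
  exact (f u).2

/-- The endomorphism `(l, t) ↦ ([x_i, l] + t x_i, 0)`. -/
noncomputable def genEnd (i : X) : Module.End K (𝓛 × K) :=
  LinearMap.prod
    ((LieAlgebra.ad K 𝓛 (FreeLieAlgebra.of K i)).comp (LinearMap.fst K 𝓛 K) +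
      (LinearMap.toSpanSingleton K 𝓛 (FreeLieAlgebra.of K i)).comp (LinearMap.snd K 𝓛 K)) 0

theorem genEnd_apply (i : X) (l : 𝓛) (t : K) :
    genEnd K X i (l, t) = (⁅FreeLieAlgebra.of K i, l⁆ + t • FreeLieAlgebra.of K i, 0) := by
  simp [genEnd]

abbrev Words := MonoidAlgebra K (FreeMonoid X)

noncomputable def Phi : Words K X →ₐ[K] Module.End K (𝓛 × K) :=
  MonoidAlgebra.lift K _ _ (FreeMonoid.lift (genEnd K X))

attribute [local instance] LieRing.ofAssociativeRing

noncomputable def iota : 𝓛 →ₗ⁅K⁆ Words K X :=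
  FreeLieAlgebra.lift K (fun i => MonoidAlgebra.single (FreeMonoid.of i) 1)

noncomputable def Psi : 𝓛 →ₗ⁅K⁆ Module.End K (𝓛 × K) := FreeLieAlgebra.lift K (genEnd K X)

theorem Phi_iota (u : 𝓛) : Phi K X (iota K X u) = Psi K X u := by
  have : (AlgHom.toLieHom (Phi K X)).comp (iota K X) = Psi K X := by
    ext1 i
    simp [Phi, iota, Psi, MonoidAlgebra.lift_single]
  exact congrArg (fun F : 𝓛 →ₗ⁅K⁆ Module.End K (𝓛 × K) => F u) this

theorem Psi_aux (u : 𝓛) : (∀ v, (Psi K X u v).2 = 0) ∧ ∀ l, (Psi K X u (l, 0)).1 = ⁅u, l⁆ := by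
  let S : LieSubalgebra K 𝓛 :=
    { carrier := {u | (∀ v, (Psi K X u v).2 = 0) ∧ ∀ l, (Psi K X u (l, 0)).1 = ⁅u, l⁆}
      add_mem' := by
        rintro u v ⟨h1, h2⟩ ⟨h3, h4⟩
        refine ⟨fun w => ?_, fun l => ?_⟩
        · simp [h1, h3]
        · simp [h2, h4]
      zero_mem' := by simp
      smul_mem' := by
        rintro t u ⟨h1, h2⟩
        refine ⟨fun w => ?_, fun l => ?_⟩
        · simp [h1]
        · simp [h2]
      lie_mem' := by
        rintro u v ⟨h1, h2⟩ ⟨h3, h4⟩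
        have e1 : ∀ l, Psi K X u (l, 0) = (⁅u, l⁆, 0) := fun l => Prod.ext (h2 l) (h1 _)
        have e2 : ∀ l, Psi K X v (l, 0) = (⁅v, l⁆, 0) := fun l => Prod.ext (h4 l) (h3 _)
        refine ⟨fun w => ?_, fun l => ?_⟩
        · simp [LieRing.of_associative_ring_bracket, h1, h3]
        · simp [LieRing.of_associative_ring_bracket, e1, e2] }
  refine free_induct S (fun i => ?_) u
  refine ⟨fun w => ?_, fun l => ?_⟩
  · obtain ⟨l, t⟩ := w
    simp [Psi, genEnd_apply]
  · simp [Psi, genEnd_apply]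

/-- The Euler derivation. -/
noncomputable def Eul : 𝓛 →ₗ[K] 𝓛 :=
  (LinearMap.fst K 𝓛 K).comp
    ((LinearMap.applyₗ ((0 : 𝓛), (1 : K))).comp (Psi K X : 𝓛 →ₗ[K] Module.End K (𝓛 × K)))

theorem Eul_apply (u : 𝓛) : Eul K X u = (Psi K X u (0, 1)).1 := rfl

theorem Eul_of (i : X) : Eul K X (FreeLieAlgebra.of K i) = FreeLieAlgebra.of K i := by
  simp [Eul_apply, Psi, genEnd_apply]

theorem Eul_lie (u v : 𝓛) : Eul K X ⁅u, v⁆ = ⁅Eul K X u, v⁆ + ⁅u, Eul K X v⁆ := by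
  have e : ∀ w, Psi K X w (0, 1) = (Eul K X w, 0) := fun w =>
    Prod.ext rfl ((Psi_aux K X w).1 _)
  have e1 : ∀ w l, Psi K X w (l, 0) = (⁅w, l⁆, 0) := fun w l =>
    Prod.ext ((Psi_aux K X w).2 l) ((Psi_aux K X w).1 _)
  rw [Eul_apply, LieHom.map_lie, LieRing.of_associative_ring_bracket]
  simp only [LinearMap.sub_apply, Module.End.mul_apply, e, e1, Prod.fst_sub]
  rw [← lie_skew v]
  abel

theorem Eul_sub_mem_one (u : 𝓛) : Eul K X u - u ∈ lowerCentralSeries K 𝓛 𝓛 1 := by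
  let S : LieSubalgebra K 𝓛 :=
    { carrier := {u | Eul K X u - u ∈ lowerCentralSeries K 𝓛 𝓛 1}
      add_mem' := fun {u v} hu hv => by
        simp only [Set.mem_ofPred_eq, map_add] at *
        rw [add_sub_add_comm]; exact add_mem hu hv
      zero_mem' := by simp
      smul_mem' := fun t u hu => by
        simp only [Set.mem_ofPred_eq, map_smul] at *
        rw [← smul_sub]; exact Submodule.smul_mem _ t hu
      lie_mem' := fun {u v} _ _ => by
        simp only [Set.mem_ofPred_eq]
        rw [Eul_lie]
        have h := fun a b : 𝓛 => lie_mem_lcs_succ (K := K) 0 a b (mem_lcs_zero b)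
        exact sub_mem (add_mem (h _ _) (h _ _)) (h _ _) }
  refine free_induct S (fun i => ?_) u
  change Eul K X _ - _ ∈ lowerCentralSeries K 𝓛 𝓛 1
  rw [Eul_of, sub_self]
  exact zero_mem _

theorem Eul_sub_mem (m : ℕ) : ∀ u ∈ lowerCentralSeries K 𝓛 𝓛 m,
    Eul K X u - ((m : K) + 1) • u ∈ lowerCentralSeries K 𝓛 𝓛 (m + 1) := by
  induction m with
  | zero => intro u _; simpa using Eul_sub_mem_one K X u
  | succ m ih =>
    intro u hu
    refine lcs_succ_induct m
      ((lowerCentralSeries K 𝓛 𝓛 (m + 1 + 1)).toSubmodule.comap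
        (Eul K X - (((m + 1 : ℕ) : K) + 1) • LinearMap.id)) ?_ u hu
    intro x v hv
    simp only [Submodule.mem_comap, LinearMap.sub_apply, LinearMap.smul_apply, LinearMap.id_apply,
      LieSubmodule.mem_toSubmodule]
    have : Eul K X ⁅x, v⁆ - (((m + 1 : ℕ) : K) + 1) • ⁅x, v⁆ =
        ⁅Eul K X x - x, v⁆ + ⁅x, Eul K X v - ((m : K) + 1) • v⁆ := by
      rw [Eul_lie]
      rw [sub_lie, lie_sub, lie_smul]
      push_cast
      module
    rw [this]
    refine add_mem ?_ (lie_mem_lcs_succ _ _ _ (ih v hv))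
    have := lie_mem_lcs_add 1 m _ _ (Eul_sub_mem_one K X x) hv
    rwa [add_comm 1 m] at this

theorem mem_lcs_of_Eul [CharZero K] (k : ℕ) (u : 𝓛) (h : Eul K X u ∈ lowerCentralSeries K 𝓛 𝓛 k) :
    u ∈ lowerCentralSeries K 𝓛 𝓛 k := by
  have : ∀ j, j ≤ k → u ∈ lowerCentralSeries K 𝓛 𝓛 j := by
    intro j
    induction j with
    | zero => intro _; exact mem_lcs_zero u
    | succ j ih =>
      intro hj
      have h1 := Eul_sub_mem K X j u (ih (by omega))
      have h2 := sub_mem (lcs_mono hj h) h1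
      rw [sub_sub_cancel] at h2
      have h3 : ((j : K) + 1) ≠ 0 := by exact_mod_cast Nat.succ_ne_zero j
      have h4 := Submodule.smul_mem (lowerCentralSeries K 𝓛 𝓛 (j+1)).toSubmodule ((j : K) + 1)⁻¹ h2
      rwa [inv_smul_smul₀ h3] at h4
  exact this k le_rfl

theorem word_mem (w : FreeMonoid X) : w ≠ 1 →
    ∃ l ∈ lowerCentralSeries K 𝓛 𝓛 (w.length - 1),
      FreeMonoid.lift (genEnd K X) w (0, 1) = (l, 0) := by
  induction w using FreeMonoid.inductionOn' with
  | one => intro h; exact absurd rfl h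
  | of_mul i w ih =>
    intro _
    rw [map_mul, FreeMonoid.lift_eval_of, Module.End.mul_apply]
    by_cases hw : w = 1
    · subst hw
      refine ⟨FreeLieAlgebra.of K i, mem_lcs_zero _, ?_⟩
      simp [genEnd_apply]
    · obtain ⟨l, hl, e⟩ := ih hw
      refine ⟨⁅FreeLieAlgebra.of K i, l⁆, ?_, by rw [e, genEnd_apply]; simp⟩
      have h0 : w.length ≠ 0 := fun h => hw (FreeMonoid.length_eq_zero.mp h)
      have := lie_mem_lcs_succ _ (FreeLieAlgebra.of K i) l hl
      have hlen : (FreeMonoid.of i * w).length - 1 = w.length - 1 + 1 := by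
        rw [FreeMonoid.length_mul, FreeMonoid.length_of]; omega
      rw [hlen]
      exact this

/-- If the associative image of `u` has no word of length `≤ k` then `u ∈ L^{k+1}`. -/
theorem mem_lcs_of_coeff [CharZero K] (k : ℕ) (u : 𝓛)
    (h : ∀ w : FreeMonoid X, w.length ≤ k → (iota K X u).coeff w = 0) :
    u ∈ lowerCentralSeries K 𝓛 𝓛 k := by
  apply mem_lcs_of_Eul
  rw [Eul_apply, ← Phi_iota, Phi, MonoidAlgebra.lift_apply, Finsupp.sum, LinearMap.sum_apply,
    Prod.fst_sum]
  refine sum_mem fun w hw => ?_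
  have hl : k < w.length := by
    by_contra hlt
    exact (Finsupp.mem_support_iff.mp hw) (h w (by omega))
  have hw1 : w ≠ 1 := by rintro rfl; simp at hl
  obtain ⟨l, hlm, e⟩ := word_mem K X w hw1
  rw [LinearMap.smul_apply, e]
  exact Submodule.smul_mem (lowerCentralSeries K 𝓛 𝓛 k).toSubmodule _ (lcs_mono (by omega) hlm)

def lowSub (k : ℕ) : Submodule K (Words K X) where
  carrier := {a | ∀ w : FreeMonoid X, w.length ≤ k → a.coeff w = 0}
  add_mem' := fun {a b} ha hb w hw => by simp [ha w hw, hb w hw]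
  zero_mem' := fun w _ => by simp
  smul_mem' := fun t a ha w hw => by simp [ha w hw]

theorem lowSub_mul (i j : ℕ) (a b : Words K X) (ha : a ∈ lowSub K X i) (hb : b ∈ lowSub K X j) :
    a * b ∈ lowSub K X (i + j + 1) := by
  classical
  intro w hw
  by_contra hne
  have := MonoidAlgebra.support_coeff_mul_subset a b (Finsupp.mem_support_iff.mpr hne)
  obtain ⟨p, hp, q, hq, rfl⟩ := Finset.mem_mul.mp this
  have h1 : i < p.length := by
    by_contra hlt
    exact (Finsupp.mem_support_iff.mp hp) (ha p (by omega))
  have h2 : j < q.length := by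
    by_contra hlt
    exact (Finsupp.mem_support_iff.mp hq) (hb q (by omega))
  rw [FreeMonoid.length_mul] at hw
  omega

theorem iota_mem_zero (u : 𝓛) : iota K X u ∈ lowSub K X 0 := by
  let S : LieSubalgebra K 𝓛 :=
    { (lowSub K X 0).comap (iota K X : 𝓛 →ₗ[K] Words K X) with
      lie_mem' := fun {u v} hu hv => by
        change iota K X ⁅u, v⁆ ∈ lowSub K X 0
        rw [LieHom.map_lie, LieRing.of_associative_ring_bracket]
        exact sub_mem (fun w hw => lowSub_mul K X 0 0 _ _ hu hv w (by omega))
          (fun w hw => lowSub_mul K X 0 0 _ _ hv hu w (by omega)) }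
  refine free_induct S (fun i => ?_) u
  change iota K X _ ∈ lowSub K X 0
  intro w hw
  have : w = 1 := FreeMonoid.length_eq_zero.mp (by omega)
  subst this
  simp [iota, MonoidAlgebra.coeff_single]

theorem iota_mem (k : ℕ) : ∀ u ∈ lowerCentralSeries K 𝓛 𝓛 k, iota K X u ∈ lowSub K X k := by
  induction k with
  | zero => intro u _; exact iota_mem_zero K X u
  | succ k ih =>
    intro u hu
    refine lcs_succ_induct k ((lowSub K X (k + 1)).comap (iota K X : 𝓛 →ₗ[K] Words K X)) ?_ u hu
    intro x m hm
    change iota K X ⁅x, m⁆ ∈ lowSub K X (k + 1)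
    rw [LieHom.map_lie, LieRing.of_associative_ring_bracket]
    have h1 := lowSub_mul K X 0 k _ _ (iota_mem_zero K X x) (ih m hm)
    have h2 := lowSub_mul K X k 0 _ _ (ih m hm) (iota_mem_zero K X x)
    rw [zero_add] at h1
    exact sub_mem h1 h2

end Free

section Comb

variable {K : Type*} [Field K] {X : Type*}

local notation "𝓛" => FreeLieAlgebra K X

attribute [local instance] LieRing.ofAssociativeRing

theorem coeff_right_same (a : Words K X) (v : FreeMonoid X) (k : X) :
    (a * MonoidAlgebra.single (FreeMonoid.of k) 1).coeff (v * FreeMonoid.of k) = a.coeff v := by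
  rw [MonoidAlgebra.coeff_mul_single_eq_coeff_mul v (fun m' _ => mul_left_inj _), mul_one]

theorem coeff_right_ne (a : Words K X) (v : FreeMonoid X) {j k : X} (h : j ≠ k) :
    (a * MonoidAlgebra.single (FreeMonoid.of j) 1).coeff (v * FreeMonoid.of k) = 0 := by
  apply MonoidAlgebra.coeff_mul_single_of_forall_mul_ne
  intro d hd
  have := congrArg FreeMonoid.toList hd
  simp only [FreeMonoid.toList_mul, FreeMonoid.toList_of] at this
  have h2 := (List.append_inj' this rfl).2
  simp at h2
  exact h h2

theorem coeff_left_same (a : Words K X) (v : FreeMonoid X) (k : X) :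
    (MonoidAlgebra.single (FreeMonoid.of k) 1 * a).coeff (FreeMonoid.of k * v) = a.coeff v := by
  rw [MonoidAlgebra.coeff_single_mul_eq_mul_coeff v (fun m' _ => mul_right_inj _), one_mul]

theorem coeff_left_ne (a : Words K X) (v : FreeMonoid X) {j k : X} (h : j ≠ k) :
    (MonoidAlgebra.single (FreeMonoid.of j) 1 * a).coeff (FreeMonoid.of k * v) = 0 := by
  apply MonoidAlgebra.coeff_single_mul_of_forall_mul_ne
  intro d hd
  have := congrArg FreeMonoid.toList hd
  simp only [FreeMonoid.toList_mul, FreeMonoid.toList_of] at this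
  simp at this
  exact h this.1

theorem coeff_iota_lie (u : 𝓛) (k : X) (w : FreeMonoid X) :
    (iota K X ⁅u, FreeLieAlgebra.of K k⁆).coeff w =
      (iota K X u * MonoidAlgebra.single (FreeMonoid.of k) 1).coeff w -
      (MonoidAlgebra.single (FreeMonoid.of k) 1 * iota K X u).coeff w := by
  rw [LieHom.map_lie, LieRing.of_associative_ring_bracket]
  simp [iota]

theorem iota_coeff_one (u : 𝓛) : (iota K X u).coeff 1 = 0 :=
  iota_mem_zero K X u 1 (by simp)

theorem center_lemma [CharZero K] (hX : ∀ a : X, ∃ c, c ≠ a) (n : ℕ) (u : 𝓛)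
    (h : ∀ k, ⁅u, FreeLieAlgebra.of K k⁆ ∈ lowerCentralSeries K 𝓛 𝓛 (n + 1)) :
    u ∈ lowerCentralSeries K 𝓛 𝓛 n := by
  apply mem_lcs_of_coeff
  intro w hw
  cases w using FreeMonoid.casesOn with
  | one => exact iota_coeff_one u
  | of_mul m v =>
    obtain ⟨k, hk⟩ := hX m
    have h1 := iota_mem K X (n + 1) _ (h k) (FreeMonoid.of m * v * FreeMonoid.of k)
      (by rw [FreeMonoid.length_mul, FreeMonoid.length_of]; omega)
    rw [coeff_iota_lie, coeff_right_same, mul_assoc, coeff_left_ne _ _ hk, sub_zero] at h1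
    exact h1

theorem sym_lemma [CharZero K] (hX : ∀ a b : X, ∃ c, c ≠ a ∧ c ≠ b) (n : ℕ) (p : X → X → 𝓛)
    (hs : ∀ i j, p i j - p j i ∈ lowerCentralSeries K 𝓛 𝓛 n)
    (hr : ∀ i j k, ⁅p i j, FreeLieAlgebra.of K k⁆ - ⁅p i k, FreeLieAlgebra.of K j⁆ ∈
      lowerCentralSeries K 𝓛 𝓛 (n + 1)) (i j : X) :
    p i j ∈ lowerCentralSeries K 𝓛 𝓛 n := by
  have hs' : ∀ i j w, FreeMonoid.length w ≤ n →
      (iota K X (p i j)).coeff w = (iota K X (p j i)).coeff w := by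
    intro i j w hw
    have := iota_mem K X n _ (hs i j) w hw
    rw [map_sub, MonoidAlgebra.coeff_sub, Finsupp.sub_apply] at this
    exact sub_eq_zero.mp this
  have hr' : ∀ i j k w, FreeMonoid.length w ≤ n + 1 →
      (iota K X ⁅p i j, FreeLieAlgebra.of K k⁆).coeff w =
      (iota K X ⁅p i k, FreeLieAlgebra.of K j⁆).coeff w := by
    intro i j k w hw
    have := iota_mem K X (n + 1) _ (hr i j k) w hw
    rw [map_sub, MonoidAlgebra.coeff_sub, Finsupp.sub_apply] at this
    exact sub_eq_zero.mp this
  -- first letter different from `j`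
  have h1 : ∀ i j m v, FreeMonoid.length (FreeMonoid.of m * v) ≤ n → m ≠ j →
      (iota K X (p i j)).coeff (FreeMonoid.of m * v) = 0 := by
    intro i j m v hw hmj
    obtain ⟨k, hkm, hkj⟩ := hX m j
    have h := hr' i j k (FreeMonoid.of m * v * FreeMonoid.of k)
      (by rw [FreeMonoid.length_mul, FreeMonoid.length_of]; omega)
    rw [coeff_iota_lie, coeff_iota_lie, coeff_right_same, coeff_right_ne _ _ hkj.symm, mul_assoc,
      coeff_left_ne _ _ hkm, coeff_left_ne _ _ hmj.symm, sub_zero, sub_zero] at h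
    exact h
  -- off-diagonal elements
  have h2 : ∀ i j w, FreeMonoid.length w ≤ n → i ≠ j → (iota K X (p i j)).coeff w = 0 := by
    intro i j w hw hij
    cases w using FreeMonoid.casesOn with
    | one => exact iota_coeff_one _
    | of_mul m v =>
      by_cases hmj : m = j
      · rw [hs' i j _ hw]
        exact h1 j i m v hw (by rw [hmj]; exact hij.symm)
      · exact h1 i j m v hw hmj
  apply mem_lcs_of_coeff
  intro w hw
  by_cases hij : i = j
  swap
  · exact h2 i j w hw hij
  subst hij
  cases w using FreeMonoid.casesOn with
  | one => exact iota_coeff_one _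
  | of_mul m v =>
    by_cases hmi : m = i
    swap
    · exact h1 i i m v hw hmi
    subst hmi
    obtain ⟨k, hkm, -⟩ := hX m m
    rw [FreeMonoid.length_mul, FreeMonoid.length_of] at hw
    have h := hr' m m k (FreeMonoid.of m * v * FreeMonoid.of k)
      (by simp only [FreeMonoid.length_mul, FreeMonoid.length_of]; omega)
    rw [coeff_iota_lie, coeff_iota_lie, coeff_right_same, coeff_right_ne _ _ hkm.symm, mul_assoc,
      coeff_left_ne _ _ hkm, coeff_left_same, sub_zero, zero_sub,
      h2 m k _ (by simp only [FreeMonoid.length_mul, FreeMonoid.length_of]; omega) hkm.symm,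
      neg_zero] at h
    exact h

end Comb

section Structure

variable {K : Type*} [Field K] {X : Type*} {N : Type*} [LieRing N] [LieAlgebra K N]

local notation "𝓛" => FreeLieAlgebra K X

theorem pi_mem (π : 𝓛 →ₗ⁅K⁆ N) (hπ : Function.Surjective π) (k : ℕ) (u : 𝓛)
    (hu : u ∈ lowerCentralSeries K 𝓛 𝓛 k) : π u ∈ lowerCentralSeries K N N k := by
  rw [← LieIdeal.lowerCentralSeries_map_eq k hπ]
  exact LieIdeal.mem_map hu

theorem mem_of_pi_mem (π : 𝓛 →ₗ⁅K⁆ N) (hπ : Function.Surjective π) (c : ℕ)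
    (hker : ∀ u, π u = 0 ↔ u ∈ lowerCentralSeries K 𝓛 𝓛 c) (k : ℕ) (hk : k ≤ c) (u : 𝓛)
    (hu : π u ∈ lowerCentralSeries K N N k) : u ∈ lowerCentralSeries K 𝓛 𝓛 k := by
  rw [← LieIdeal.lowerCentralSeries_map_eq k hπ] at hu
  obtain ⟨v, hv⟩ := LieIdeal.mem_map_of_surjective hπ hu
  have h1 : π (u - v) = 0 := by rw [map_sub, hv, sub_self]
  have h2 := lcs_mono hk ((hker _).mp h1)
  have h3 := add_mem h2 v.2
  rwa [sub_add_cancel] at h3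

theorem step [CharZero K] (hX : ∀ a b : X, ∃ c, c ≠ a ∧ c ≠ b)
    (π : 𝓛 →ₗ⁅K⁆ N) (hπ : Function.Surjective π) (c : ℕ)
    (hker : ∀ u, π u = 0 ↔ u ∈ lowerCentralSeries K 𝓛 𝓛 c)
    (mul : N →ₗ[K] N →ₗ[K] N) (hmul : IsCPAStructure K mul) (k : ℕ) (hk : 2 ≤ k)
    (hkc : k + 2 ≤ c) (hP : ∀ x y, mul x y ∈ lowerCentralSeries K N N k) (x y : N) :
    mul x y ∈ lowerCentralSeries K N N (k + 1) := by
  have hd : ∀ x, ∀ y ∈ lowerCentralSeries K N N k, mul x y ∈ lowerCentralSeries K N N (k + 2) :=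
    fun x y hy => lcs_mono (by omega)
      (der_lcs (mul x) (hmul.mul_bracket x) k (hP x) k y hy)
  have hb : ∀ x y z : N, mul ⁅x, y⁆ z ∈ lowerCentralSeries K N N (k + 2) := by
    intro x y z
    rw [hmul.bracket_mul]
    exact sub_mem (hd _ _ (hP _ _)) (hd _ _ (hP _ _))
  have hgen : ∀ i j, mul (π (FreeLieAlgebra.of K i)) (π (FreeLieAlgebra.of K j)) ∈
      lowerCentralSeries K N N (k + 1) := by
    choose p hp using fun i j : X =>
      hπ (mul (π (FreeLieAlgebra.of K i)) (π (FreeLieAlgebra.of K j)))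
    intro i j
    rw [← hp]
    apply pi_mem π hπ
    refine sym_lemma hX (k + 1) p (fun i j => ?_) (fun i j l => ?_) i j
    · apply mem_of_pi_mem π hπ c hker _ (by omega)
      rw [map_sub, hp, hp, hmul.comm, sub_self]
      exact zero_mem _
    · apply mem_of_pi_mem π hπ c hker _ (by omega)
      rw [map_sub, LieHom.map_lie, LieHom.map_lie, hp, hp, sub_eq_add_neg, lie_skew,
        ← hmul.mul_bracket, hmul.comm]
      exact hb _ _ _
  have hsub : ∀ z : N, (∀ i, mul (π (FreeLieAlgebra.of K i)) z ∈ lowerCentralSeries K N N (k + 1)) →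
      ∀ u, mul (π u) z ∈ lowerCentralSeries K N N (k + 1) := by
    intro z hz u
    let S : LieSubalgebra K 𝓛 :=
      { carrier := {u | mul (π u) z ∈ lowerCentralSeries K N N (k + 1)}
        add_mem' := fun {u v} hu hv => by
          simp only [Set.mem_ofPred_eq, map_add, LinearMap.add_apply] at *
          exact add_mem hu hv
        zero_mem' := by simp
        smul_mem' := fun t u hu => by
          simp only [Set.mem_ofPred_eq, map_smul, LinearMap.smul_apply] at *
          exact Submodule.smul_mem (lowerCentralSeries K N N (k + 1)).toSubmodule t hu
        lie_mem' := fun {u v} _ _ => by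
          simp only [Set.mem_ofPred_eq, LieHom.map_lie]
          exact lcs_mono (by omega) (hb _ _ _) }
    exact free_induct S hz u
  obtain ⟨u, rfl⟩ := hπ x
  obtain ⟨v, rfl⟩ := hπ y
  refine hsub _ (fun i => ?_) u
  rw [hmul.comm]
  exact hsub _ (fun j => hgen j i) v

theorem base [CharZero K] (hX : ∀ a : X, ∃ c, c ≠ a) {N₃ : Type*} [LieRing N₃] [LieAlgebra K N₃]
    (π : 𝓛 →ₗ⁅K⁆ N) (hπ : Function.Surjective π) (c : ℕ) (hc : 3 ≤ c)
    (hker : ∀ u, π u = 0 ↔ u ∈ lowerCentralSeries K 𝓛 𝓛 c)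
    (q : 𝓛 →ₗ⁅K⁆ N₃) (hq : Function.Surjective q)
    (hkerq : ∀ u, q u = 0 ↔ u ∈ lowerCentralSeries K 𝓛 𝓛 3)
    (hbase : ∀ mul : N₃ →ₗ[K] N₃ →ₗ[K] N₃, IsCPAStructure K mul →
        ∀ x y : N₃, mul x y ∈ LieAlgebra.center K N₃)
    (mul : N →ₗ[K] N →ₗ[K] N) (hmul : IsCPAStructure K mul) (x y : N) :
    mul x y ∈ lowerCentralSeries K N N 2 := by
  obtain ⟨s, hs⟩ := (π : 𝓛 →ₗ[K] N).exists_rightInverse_of_surjective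
    (LinearMap.range_eq_top.mpr hπ)
  obtain ⟨t, ht⟩ := (q : 𝓛 →ₗ[K] N₃).exists_rightInverse_of_surjective
    (LinearMap.range_eq_top.mpr hq)
  have hs' : ∀ a, π (s a) = a := fun a => LinearMap.congr_fun hs a
  have ht' : ∀ a, q (t a) = a := fun a => LinearMap.congr_fun ht a
  let r : N →ₗ[K] N₃ := (q : 𝓛 →ₗ[K] N₃).comp s
  have hr : ∀ u, r (π u) = q u := by
    intro u
    have h1 : π (s (π u) - u) = 0 := by rw [map_sub, hs', sub_self]
    have h2 := (hkerq _).mpr (lcs_mono hc ((hker _).mp h1))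
    rw [map_sub] at h2
    exact sub_eq_zero.mp h2
  have hr0 : ∀ a ∈ lowerCentralSeries K N N 3, r a = 0 := by
    intro a ha
    obtain ⟨u, rfl⟩ := hπ a
    rw [hr, hkerq]
    exact mem_of_pi_mem π hπ c hker 3 hc u ha
  have hrl : ∀ a b, r ⁅a, b⁆ = ⁅r a, r b⁆ := by
    intro a b
    obtain ⟨u, rfl⟩ := hπ a
    obtain ⟨v, rfl⟩ := hπ b
    rw [← LieHom.map_lie, hr, hr, hr, LieHom.map_lie]
  have hrs : Function.Surjective r := by
    intro z
    obtain ⟨u, rfl⟩ := hq z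
    exact ⟨π u, hr u⟩
  let τ : N₃ →ₗ[K] N := (π : 𝓛 →ₗ[K] N).comp t
  have hτ : ∀ a, τ (r a) - a ∈ lowerCentralSeries K N N 3 := by
    intro a
    obtain ⟨u, rfl⟩ := hπ a
    rw [hr]
    change π (t (q u)) - π u ∈ _
    rw [← map_sub]
    apply pi_mem π hπ
    rw [← hkerq, map_sub, ht', sub_self]
  have hid : ∀ a, ∀ b ∈ lowerCentralSeries K N N 3, mul a b ∈ lowerCentralSeries K N N 3 := by
    intro a b hb
    have := der_lcs (mul a) (hmul.mul_bracket a) 0 (fun x => mem_lcs_zero _) 3 b hb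
    simpa using this
  let mul₃ : N₃ →ₗ[K] N₃ →ₗ[K] N₃ := (mul.compl₁₂ τ τ).compr₂ r
  have hm : ∀ a b, mul₃ (r a) (r b) = r (mul a b) := by
    intro a b
    change r (mul (τ (r a)) (τ (r b))) = r (mul a b)
    rw [← sub_eq_zero, ← map_sub]
    apply hr0
    have e : mul (τ (r a)) (τ (r b)) - mul a b =
        mul (τ (r b)) (τ (r a) - a) + mul a (τ (r b) - b) := by
      rw [map_sub, map_sub, hmul.comm (τ (r b)) (τ (r a)), hmul.comm (τ (r b)) a]
      abel
    rw [e]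
    exact add_mem (hid _ _ (hτ a)) (hid _ _ (hτ b))
  have hCPA : IsCPAStructure K mul₃ := by
    refine ⟨fun x y => ?_, fun x y z => ?_, fun x y z => ?_⟩
    · obtain ⟨a, rfl⟩ := hrs x
      obtain ⟨b, rfl⟩ := hrs y
      rw [hm, hm, hmul.comm]
    · obtain ⟨a, rfl⟩ := hrs x
      obtain ⟨b, rfl⟩ := hrs y
      obtain ⟨d, rfl⟩ := hrs z
      rw [← hrl, hm, hm, hm, hm, hm, hmul.bracket_mul, map_sub]
    · obtain ⟨a, rfl⟩ := hrs x
      obtain ⟨b, rfl⟩ := hrs y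
      obtain ⟨d, rfl⟩ := hrs z
      rw [← hrl, hm, hm, hm, hmul.mul_bracket, map_add, hrl, hrl]
  have hcen := hbase mul₃ hCPA (r x) (r y)
  rw [hm] at hcen
  obtain ⟨p, hp⟩ := hπ (mul x y)
  rw [← hp] at hcen ⊢
  rw [hr] at hcen
  apply pi_mem π hπ
  apply center_lemma hX
  intro k
  rw [← hkerq, LieHom.map_lie, ← lie_skew]
  have := (LieModule.mem_maxTrivSubmodule K N₃ N₃ _).mp hcen (q (FreeLieAlgebra.of K k))
  rw [this, neg_zero]

theorem final [CharZero K] (hX : ∀ a b : X, ∃ c, c ≠ a ∧ c ≠ b)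
    {N₃ : Type*} [LieRing N₃] [LieAlgebra K N₃]
    (π : 𝓛 →ₗ⁅K⁆ N) (hπ : Function.Surjective π) (c : ℕ) (hc : 3 ≤ c)
    (hker : ∀ u, π u = 0 ↔ u ∈ lowerCentralSeries K 𝓛 𝓛 c)
    (q : 𝓛 →ₗ⁅K⁆ N₃) (hq : Function.Surjective q)
    (hkerq : ∀ u, q u = 0 ↔ u ∈ lowerCentralSeries K 𝓛 𝓛 3)
    (hbase : ∀ mul : N₃ →ₗ[K] N₃ →ₗ[K] N₃, IsCPAStructure K mul →
        ∀ x y : N₃, mul x y ∈ LieAlgebra.center K N₃)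
    (mul : N →ₗ[K] N →ₗ[K] N) (hmul : IsCPAStructure K mul) (x y : N) :
    mul x y ∈ LieAlgebra.center K N := by
  have h : ∀ k, k + 3 ≤ c → ∀ x y, mul x y ∈ lowerCentralSeries K N N (k + 2) := by
    intro k
    induction k with
    | zero =>
      intro _
      exact base (fun a => (hX a a).imp fun _ h => h.1) π hπ c hc hker q hq hkerq hbase mul hmul
    | succ k ih =>
      intro hk x y
      have := step hX π hπ c hker mul hmul (k + 2) (by omega) (by omega) (ih (by omega)) x y
      convert this using 2
  obtain ⟨k, rfl⟩ := Nat.exists_eq_add_of_le' hc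
  refine (LieModule.mem_maxTrivSubmodule K N N _).mpr fun z => ?_
  have h1 := lie_mem_lcs_succ (k + 2) z _ (h k le_rfl x y)
  obtain ⟨u, hu⟩ := hπ ⁅z, mul x y⁆
  rw [← hu] at h1 ⊢
  exact (hker u).mpr (mem_of_pi_mem π hπ _ hker (k + 3) le_rfl u h1)

end Structure

/-- The quotient map as a Lie algebra morphism. -/
noncomputable def quotMap (K : Type*) [Field K] (g c : ℕ) :
    FreeLieAlgebra K (Fin g) →ₗ⁅K⁆ FreeNilpotentLieAlgebra K g c where
  toFun := LieSubmodule.Quotient.mk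
  map_add' _ _ := rfl
  map_smul' _ _ := rfl
  map_lie' := rfl

theorem quotMap_surjective (K : Type*) [Field K] (g c : ℕ) :
    Function.Surjective (quotMap K g c) := Quot.mk_surjective

theorem quotMap_eq_zero (K : Type*) [Field K] (g c : ℕ) (u : FreeLieAlgebra K (Fin g)) :
    quotMap K g c u = 0 ↔
      u ∈ lowerCentralSeries K (FreeLieAlgebra K (Fin g)) (FreeLieAlgebra K (Fin g)) c :=
  LieSubmodule.Quotient.mk_eq_zero'

end CPAProof

/-- Fix `g ≥ 3`. If every CPA-structure on `F_{g,3}` is central, then for every `c ≥ 3`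
every CPA-structure on `F_{g,c}` is central (over a field of characteristic zero). -/
theorem cpa_on_Fgc_central_of_Fg3_central (K : Type*) [Field K] [CharZero K]
    (g : ℕ) (hg : 3 ≤ g)
    (hbase : ∀ mul : FreeNilpotentLieAlgebra K g 3 →ₗ[K]
        FreeNilpotentLieAlgebra K g 3 →ₗ[K] FreeNilpotentLieAlgebra K g 3,
      IsCPAStructure K mul →
        ∀ x y : FreeNilpotentLieAlgebra K g 3,
          mul x y ∈ LieAlgebra.center K (FreeNilpotentLieAlgebra K g 3)) :
    ∀ c : ℕ, 3 ≤ c →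
      ∀ mul : FreeNilpotentLieAlgebra K g c →ₗ[K]
          FreeNilpotentLieAlgebra K g c →ₗ[K] FreeNilpotentLieAlgebra K g c,
        IsCPAStructure K mul →
          ∀ x y : FreeNilpotentLieAlgebra K g c,
            mul x y ∈ LieAlgebra.center K (FreeNilpotentLieAlgebra K g c) := by
  intro c hc mul hmul x y
  have hX : ∀ a b : Fin g, ∃ d, d ≠ a ∧ d ≠ b := by
    intro a b
    have : ∃ d ∉ ({a, b} : Finset (Fin g)), True := by
      by_contra hcon
      have h1 : (Finset.univ : Finset (Fin g)) ⊆ {a, b} := fun d _ => by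
        by_contra hd
        exact hcon ⟨d, hd, trivial⟩
      have h2 := (Finset.card_le_card h1).trans Finset.card_le_two
      rw [Finset.card_univ, Fintype.card_fin] at h2
      omega
    obtain ⟨d, hd, -⟩ := this
    exact ⟨d, by simpa using hd⟩
  exact CPAProof.final hX (CPAProof.quotMap K g c) (CPAProof.quotMap_surjective K g c) c hc
    (CPAProof.quotMap_eq_zero K g c) (CPAProof.quotMap K g 3) (CPAProof.quotMap_surjective K g 3)
    (CPAProof.quotMap_eq_zero K g 3) hbase mul hmul x y
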